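/- arXiv:1002.3310 — 7 statements merged into one kernel-verified Lean document; each statement's English description precedes it below -/
import Mathlib

section
/- If (x, y) ∈ K² satisfies the Weierstrass equation y² + x·y + t·y = x³ + t·x² and x ≠ −t, then the pair (X, Y) := (−y/(x + t), −x/t) satisfies X(X − 1)(1 − Y) = t·Y²; that is, the change of coordinates x₀ = −y/(x+t), y₀ = −x/t carries the Weierstrass curve y² + xy + ty = x³ + tx² onto the curve f(x₀) = t·g(y₀), where f(x₀) = x₀(x₀ − 1) and g(y₀) = y₀²/(1 − y₀). -/
/-!
With `s = x + t` the Weierstrass equation reads `y (y + s) = x² s`. Since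
`X (X - 1) = y (y + s) / s²`, `1 - Y = s / t` and `t Y² = x² / t`, the difference of the two sides
of the equation in `(X, Y)` is that of the Weierstrass equation divided by the nonzero element
`t s`.
-/

section Field

variable {F : Type*} [Field F]

lemma neg_div_mul_neg_div_sub_one {s : F} (hs : s ≠ 0) (y : F) :
    -y / s * (-y / s - 1) = y * (y + s) / s ^ 2 := by
  rw [div_sub_one hs, div_mul_div_comm]
  ring

lemma one_sub_neg_div {t : F} (ht : t ≠ 0) (x : F) : 1 - -x / t = (x + t) / t := by
  rw [one_sub_div ht, sub_neg_eq_add, add_comm]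

lemma mul_neg_div_sq (t x : F) : t * (-x / t) ^ 2 = x ^ 2 / t := by
  field_simp

theorem coordinate_change_sub_eq_weierstrass_sub_div {t x : F} (ht : t ≠ 0) (hs : x + t ≠ 0)
    (y : F) :
    -y / (x + t) * (-y / (x + t) - 1) * (1 - -x / t) - t * (-x / t) ^ 2 =
      (y ^ 2 + x * y + t * y - (x ^ 3 + t * x ^ 2)) / (t * (x + t)) :=
  calc
    _ = y * (y + (x + t)) / (x + t) ^ 2 * ((x + t) / t) - x ^ 2 / t := by
      rw [neg_div_mul_neg_div_sub_one hs, one_sub_neg_div ht, mul_neg_div_sq]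
    _ = (y * (y + (x + t)) - x ^ 2 * (x + t)) / (t * (x + t)) := by field_simp
    _ = _ := by ring

theorem stmt1_general {t x y : F} (ht : t ≠ 0) (hx : x ≠ -t) :
    -y / (x + t) * (-y / (x + t) - 1) * (1 - -x / t) = t * (-x / t) ^ 2 ↔
      y ^ 2 + x * y + t * y = x ^ 3 + t * x ^ 2 := by
  have hs : x + t ≠ 0 := mt eq_neg_of_add_eq_zero_left hx
  rw [← sub_eq_zero, coordinate_change_sub_eq_weierstrass_sub_div ht hs, div_eq_zero_iff,
    or_iff_left (mul_ne_zero ht hs), sub_eq_zero]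

end Field

/-- Let `k` be a field, `K = k(t)`, `t = X ∈ K`.  If `(x, y) ∈ K²` satisfies
the Weierstrass equation `y² + x·y + t·y = x³ + t·x²` and `x ≠ −t`, then the pair
`(X, Y) = (−y/(x+t), −x/t)` satisfies `X(X−1)(1−Y) = t·Y²`; that is, the change of
coordinates carries the Weierstrass curve onto the curve `f(x₀) = t·g(y₀)` with
`f(x₀) = x₀(x₀−1)` and `g(y₀) = y₀²/(1−y₀)`. -/
theorem stmt1 (k : Type*) [Field k] (t x y : RatFunc k) (ht : t = RatFunc.X)
    (heq : y ^ 2 + x * y + t * y = x ^ 3 + t * x ^ 2) (hx : x ≠ -t) :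
    (-y / (x + t)) * ((-y / (x + t)) - 1) * (1 - (-x / t)) = t * (-x / t) ^ 2 :=
  (stmt1_general (ht ▸ RatFunc.X_ne_zero) hx).mpr heq
end

section
/- Let p = 2, n ≥ 1, q = 2^n, and d = q + 1. Then the pair (x₀, y₀) = ( u^q(u^q − u) , u^{2q}·(u^2 + u^4 + u^8 + ⋯ + u^{2^n}) ) ∈ K_d² (where the second coordinate is u^{2q}·Σ_{j=1}^{n} u^{2^j}) satisfies the Weierstrass equation y₀² + x₀·y₀ + u^d·y₀ = x₀³ + u^d·x₀², i.e. it defines a point of X_d(K_d). -/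
/-
The curve reads `y² + (x + t)y = x²(x + t)`. If `t = uv` and `x = v(v - u)`, then `x + t = v²` is a
square, and `y = v²s` turns the equation into `v⁴(s² + s) = v⁴(v - u)²`. In characteristic `2`, with
`v = u ^ 2ⁿ`, the Artin–Schreier equation `s² + s = (v - u)²` is solved by a telescoping sum of
Frobenius powers of `u`.
-/

theorem sum_Icc_pow_expChar_pow_sub_self {R : Type*} [CommRing R] (p : ℕ) [ExpChar R p]
    (u : R) (n : ℕ) :
    (∑ j ∈ Finset.Icc 1 n, u ^ p ^ j) ^ p - ∑ j ∈ Finset.Icc 1 n, u ^ p ^ j =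
      (u ^ p ^ n - u) ^ p :=
  calc
    _ = ∑ j ∈ Finset.Ico 1 (n + 1), (u ^ p ^ (j + 1) - u ^ p ^ j) := by
      simp only [sum_pow_char, ← pow_mul, ← pow_succ, Finset.sum_sub_distrib,
        Finset.Ico_add_one_right_eq_Icc]
    _ = u ^ p ^ (n + 1) - u ^ p := by
      rw [Finset.sum_Ico_sub (fun j => u ^ p ^ j) (Nat.le_add_left 1 n), pow_one]
    _ = (u ^ p ^ n - u) ^ p := by
      rw [sub_pow_expChar, ← pow_mul, ← pow_succ]

theorem weierstrass_equation_of_sq_add_self_eq {R : Type*} [CommRing R] {u v s : R}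
    (h : s ^ 2 + s = (v - u) ^ 2) :
    (v ^ 2 * s) ^ 2 + v * (v - u) * (v ^ 2 * s) + u * v * (v ^ 2 * s) =
      (v * (v - u)) ^ 3 + u * v * (v * (v - u)) ^ 2 := by
  linear_combination v ^ 4 * h

theorem stmt4_general {R : Type*} [CommRing R] [CharP R 2] (u : R) (n q d : ℕ)
    (hq : q = 2 ^ n) (hd : d = q + 1) :
    let x₀ : R := u ^ q * (u ^ q - u)
    let y₀ : R := u ^ (2 * q) * ∑ j ∈ Finset.Icc 1 n, u ^ (2 ^ j)
    y₀ ^ 2 + x₀ * y₀ + u ^ d * y₀ = x₀ ^ 3 + u ^ d * x₀ ^ 2 := by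
  have artinSchreier : (∑ j ∈ Finset.Icc 1 n, u ^ 2 ^ j) ^ 2 + ∑ j ∈ Finset.Icc 1 n, u ^ 2 ^ j =
      (u ^ q - u) ^ 2 := by
    rw [hq, ← sum_Icc_pow_expChar_pow_sub_self 2 u n, CharTwo.sub_eq_add]
  rw [hd, pow_succ', pow_mul' u 2 q]
  exact weierstrass_equation_of_sq_add_self_eq artinSchreier

/-- Let `p = 2`, `k` an algebraic closure of `𝔽₂`, `n ≥ 1`, `q = 2^n`,
`d = q + 1`, and `K_d = k(u)`.  Then the pair
`(x₀, y₀) = (u^q(u^q − u), u^{2q}·∑_{j=1}^{n} u^{2^j})` satisfies the Weierstrass equation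
`y₀² + x₀·y₀ + u^d·y₀ = x₀³ + u^d·x₀²`, i.e. it defines a point of `X_d(K_d)`. -/
theorem stmt4 (n : ℕ) (hn : 1 ≤ n) (q d : ℕ) (hq : q = 2 ^ n) (hd : d = q + 1) :
    let k := AlgebraicClosure (ZMod 2)
    let u : RatFunc k := RatFunc.X
    let x₀ : RatFunc k := u ^ q * (u ^ q - u)
    let y₀ : RatFunc k := u ^ (2 * q) * ∑ j ∈ Finset.Icc 1 n, u ^ (2 ^ j)
    y₀ ^ 2 + x₀ * y₀ + u ^ d * y₀ = x₀ ^ 3 + u ^ d * x₀ ^ 2 :=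
  stmt4_general RatFunc.X n q d hq hd
end

section
/- Let p be an odd prime, n ≥ 1, q = p^n, and d = q + 1. Then the pair (x₀, y₀) with x₀ = u^q(u^q − u)/(1 + 4u)^q and y₀ = u^{2q}(1 + 2u + 2u^q)/(2(1 + 4u)^{(3q−1)/2}) − u^{2q}/(2(1 + 4u)^{q−1}) in K_d² satisfies the Weierstrass equation y₀² + x₀·y₀ + u^d·y₀ = x₀³ + u^d·x₀², i.e. it defines a point of X_d(K_d). -/
/-! The point lies on a rational parametrization: if `u = U (1 - 2w)² - w (1 - w)`, then the pair
`(U w (1 - w), U² w² (1 - 2w))` satisfies `y² + x y + t y = x³ + t x²` with `t = U u`. Away from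
characteristic 2 the condition reads `1 + 4u = (1 + 4U)(1 - 2w)²`. For `U = u ^ q`, Frobenius gives
`1 + 4U = (1 + 4u) ^ q`, and since `q` is odd the condition is solved by
`1 - 2w = (1 + 4u) ^ (-(q - 1) / 2)`. -/

theorem parametrized_weierstrass_equation {R : Type*} [CommRing R] {u U w : R}
    (hu : u = U * (1 - 2 * w) ^ 2 - w * (1 - w)) :
    (U ^ 2 * w ^ 2 * (1 - 2 * w)) ^ 2 + U * w * (1 - w) * (U ^ 2 * w ^ 2 * (1 - 2 * w))
        + U * u * (U ^ 2 * w ^ 2 * (1 - 2 * w))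
      = (U * w * (1 - w)) ^ 3 + U * u * (U * w * (1 - w)) ^ 2 := by
  linear_combination -U ^ 3 * w ^ 4 * hu

section Field

variable {K : Type*} [Field K] {u U w s : K}

theorem x_coord_eq_parametrized (hU : 1 + 4 * U ≠ 0)
    (hu : u = U * (1 - 2 * w) ^ 2 - w * (1 - w)) :
    U * (U - u) / (1 + 4 * U) = U * w * (1 - w) := by
  rw [div_eq_iff hU]
  linear_combination -U * hu

theorem y_coord_eq_parametrized (h2 : (2 : K) ≠ 0) (hU : 1 + 4 * U ≠ 0)
    (hu : u = U * (1 - 2 * w) ^ 2 - w * (1 - w)) (hsw : s * (1 - 2 * w) = 1) :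
    U ^ 2 * (1 + 2 * u + 2 * U) / (2 * (s * (1 + 4 * U))) - U ^ 2 / (2 * s ^ 2)
      = U ^ 2 * w ^ 2 * (1 - 2 * w) := by
  have hs : s⁻¹ = 1 - 2 * w := inv_eq_of_mul_eq_one_right hsw
  have hfactor : 1 + 2 * u + 2 * U = (1 + 4 * U) * (1 - 2 * w + 2 * w ^ 2) := by
    linear_combination 2 * hu
  calc U ^ 2 * (1 + 2 * u + 2 * U) / (2 * (s * (1 + 4 * U))) - U ^ 2 / (2 * s ^ 2)
      = U ^ 2 * (1 - 2 * w + 2 * w ^ 2) * s⁻¹ / 2 - U ^ 2 * s⁻¹ ^ 2 / 2 := by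
        rw [hfactor]
        generalize 1 + 4 * U = D at hU
        field_simp
    _ = U ^ 2 * w ^ 2 * (1 - 2 * w) := by
        rw [hs]
        field_simp
        ring

theorem weierstrass_equation_of_sq_mul_eq (h2 : (2 : K) ≠ 0) (hU : 1 + 4 * U ≠ 0)
    (hsu : s ^ 2 * (1 + 4 * u) = 1 + 4 * U) :
    let x := U * (U - u) / (1 + 4 * U)
    let y := U ^ 2 * (1 + 2 * u + 2 * U) / (2 * (s * (1 + 4 * U))) - U ^ 2 / (2 * s ^ 2)
    y ^ 2 + x * y + U * u * y = x ^ 3 + U * u * x ^ 2 := by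
  have hs : s ≠ 0 := by
    rintro rfl
    simp [← hsu] at hU
  obtain ⟨w, hw⟩ : ∃ w, 1 - 2 * w = s⁻¹ := ⟨(1 - s⁻¹) / 2, by field_simp; ring⟩
  have hu : u = U * (1 - 2 * w) ^ 2 - w * (1 - w) := by
    have hsq : 1 + 4 * u = (1 - 2 * w) ^ 2 * (1 + 4 * U) := by
      rw [hw, ← hsu]
      field_simp
    have h4 : (2 * 2 : K) ≠ 0 := mul_ne_zero h2 h2
    apply mul_left_cancel₀ h4
    linear_combination hsq
  have hsw : s * (1 - 2 * w) = 1 := by rw [hw, mul_inv_cancel₀ hs]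
  intro x y
  simp only [x, y, x_coord_eq_parametrized hU hu, y_coord_eq_parametrized h2 hU hu hsw]
  exact parametrized_weierstrass_equation hu

theorem weierstrass_equation_of_odd {q : ℕ} (h2 : (2 : K) ≠ 0) (hu : 1 + 4 * u ≠ 0) (hq : Odd q)
    (hpow : (1 + 4 * u) ^ q = 1 + 4 * u ^ q) :
    let x := u ^ q * (u ^ q - u) / (1 + 4 * u) ^ q
    let y := u ^ (2 * q) * (1 + 2 * u + 2 * u ^ q) / (2 * (1 + 4 * u) ^ ((3 * q - 1) / 2))
      - u ^ (2 * q) / (2 * (1 + 4 * u) ^ (q - 1))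
    y ^ 2 + x * y + u ^ (q + 1) * y = x ^ 3 + u ^ (q + 1) * x ^ 2 := by
  obtain ⟨m, hm⟩ := hq
  have hexp : (3 * q - 1) / 2 = m + q := by lia
  have hexp' : q - 1 = m * 2 := by lia
  have hsu : ((1 + 4 * u) ^ m) ^ 2 * (1 + 4 * u) = 1 + 4 * u ^ q := by
    rw [← pow_mul, ← pow_succ, mul_comm m, ← hm, hpow]
  rw [hexp, hexp', pow_add, hpow, pow_mul _ m, mul_comm 2 q, pow_mul u, pow_succ u]
  exact weierstrass_equation_of_sq_mul_eq h2 (hpow ▸ pow_ne_zero q hu) hsu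

end Field

theorem one_add_ofNat_mul_pow_expChar_pow {R : Type*} [CommSemiring R] (p n a : ℕ) [ExpChar R p]
    [a.AtLeastTwo] (u : R) :
    (1 + ofNat(a) * u) ^ p ^ n = 1 + ofNat(a) * u ^ p ^ n := by
  simp only [← iterateFrobenius_def, map_add, map_mul, map_one, map_ofNat]

theorem one_add_ofNat_mul_X_ne_zero {k : Type*} [CommRing k] [IsDomain k] (a : ℕ)
    [a.AtLeastTwo] : (1 + ofNat(a) * RatFunc.X : RatFunc k) ≠ 0 := by
  have hpoly : (1 + ofNat(a) * Polynomial.X : Polynomial k) ≠ 0 := fun h ↦ by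
    simpa using congrArg (Polynomial.eval 0) h
  simpa only [map_add, map_mul, map_one, map_ofNat, RatFunc.algebraMap_X]
    using RatFunc.algebraMap_ne_zero hpoly

theorem stmt5_general {K : Type*} [Field K] (p : ℕ) [Fact p.Prime] [CharP K p] (hp2 : p ≠ 2)
    (n : ℕ) (q d : ℕ) (hq : q = p ^ n) (hd : d = q + 1) (u : K) (hu : 1 + 4 * u ≠ 0) :
    let x₀ := u ^ q * (u ^ q - u) / (1 + 4 * u) ^ q
    let y₀ := u ^ (2 * q) * (1 + 2 * u + 2 * u ^ q) / (2 * (1 + 4 * u) ^ ((3 * q - 1) / 2))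
      - u ^ (2 * q) / (2 * (1 + 4 * u) ^ (q - 1))
    y₀ ^ 2 + x₀ * y₀ + u ^ d * y₀ = x₀ ^ 3 + u ^ d * x₀ ^ 2 := by
  have hp : p.Prime := Fact.out
  have : ExpChar K p := ExpChar.prime hp
  have h2 : (2 : K) ≠ 0 := Ring.two_ne_zero (ringChar.eq K p ▸ hp2)
  have hodd : Odd q := hq ▸ (hp.odd_of_ne_two hp2).pow
  have hpow : (1 + 4 * u) ^ q = 1 + 4 * u ^ q :=
    hq ▸ one_add_ofNat_mul_pow_expChar_pow p n 4 u
  exact hd ▸ weierstrass_equation_of_odd h2 hu hodd hpow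

/-- Let `p` be an odd prime, `k` an algebraic closure of `𝔽_p`, `n ≥ 1`,
`q = p^n`, `d = q + 1`, and `K_d = k(u)`.  Then the pair `(x₀, y₀)` with
`x₀ = u^q(u^q − u)/(1 + 4u)^q` and
`y₀ = u^{2q}(1 + 2u + 2u^q)/(2(1 + 4u)^{(3q−1)/2}) − u^{2q}/(2(1 + 4u)^{q−1})`
satisfies the Weierstrass equation `y₀² + x₀·y₀ + u^d·y₀ = x₀³ + u^d·x₀²`,
i.e. it defines a point of `X_d(K_d)`. -/
theorem stmt5 (p : ℕ) [Fact p.Prime] (hp2 : p ≠ 2) (n : ℕ) (hn : 1 ≤ n) (q d : ℕ)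
    (hq : q = p ^ n) (hd : d = q + 1) :
    let k := AlgebraicClosure (ZMod p)
    let u : RatFunc k := RatFunc.X
    let x₀ : RatFunc k := u ^ q * (u ^ q - u) / (1 + 4 * u) ^ q
    let y₀ : RatFunc k :=
      u ^ (2 * q) * (1 + 2 * u + 2 * u ^ q) / (2 * (1 + 4 * u) ^ ((3 * q - 1) / 2))
        - u ^ (2 * q) / (2 * (1 + 4 * u) ^ (q - 1))
    y₀ ^ 2 + x₀ * y₀ + u ^ d * y₀ = x₀ ^ 3 + u ^ d * x₀ ^ 2 := by
  exact stmt5_general p hp2 n q d hq hd RatFunc.X (one_add_ofNat_mul_X_ne_zero 4)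
end

section
/- Let p be an odd prime, n ≥ 1, q = p^n, d = q + 1, and let x₀ = u^q(u^q − u)/(1 + 4u)^q and y₀ = u^{2q}(1 + 2u + 2u^q)/(2(1 + 4u)^{(3q−1)/2}) − u^{2q}/(2(1 + 4u)^{q−1}) in K_d. Then both sides of the Weierstrass equation evaluated at (x₀, y₀) are equal to u^{4q}(u^{2q} − 2u^{q+1} + u²)/(1 + 4u)^{3q−1}; that is, y₀² + x₀·y₀ + u^d·y₀ = u^{4q}(u^{2q} − 2u^{q+1} + u²)/(1 + 4u)^{3q−1} and x₀³ + u^d·x₀² = u^{4q}(u^{2q} − 2u^{q+1} + u²)/(1 + 4u)^{3q−1}. -/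
/-! Write `a = u`, `b = u ^ q` and `r = (1 + 4u) ^ ((q - 1) / 2)`. Since Frobenius is additive and
fixes the prime field, `(1 + 4a) r² = 1 + 4b`. This relation gives `x₀ + ab = (b / r)²`, so the
cubic side `x₀² (x₀ + ab)` is a square and the other side is `y₀ (y₀ + (b / r)²)`. The latter is,
up to its denominator, a difference of squares, evaluated by
`(1 + 2a + 2b)² - (1 + 4a)(1 + 4b) = (2(b - a))²`. -/

section Point

variable {K : Type*} [Field K]

/-- The `x`-coordinate of the point of `y² + xy + aby = x³ + abx²` attached to a solution of
`(1 + 4a) r² = 1 + 4b`. The paper's `x₀` is the case `a = u`, `b = u ^ q`,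
`r = (1 + 4u) ^ ((q - 1) / 2)`. -/
def pointX (a b r : K) : K :=
  b * (b - a) / ((1 + 4 * a) * r ^ 2)

/-- The `y`-coordinate of the point whose `x`-coordinate is `pointX a b r`; it specialises to the
paper's `y₀`. -/
def pointY (a b r : K) : K :=
  b ^ 2 * (1 + 2 * a + 2 * b) / (2 * ((1 + 4 * a) * r ^ 3)) - b ^ 2 / (2 * r ^ 2)

theorem sq_one_add_two_mul_add_two_mul_sub {R : Type*} [CommRing R] (a b : R) :
    (1 + 2 * a + 2 * b) ^ 2 - (1 + 4 * a) * (1 + 4 * b) = (2 * (b - a)) ^ 2 := by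
  ring

variable {a b r : K}

theorem pointX_add_mul (ha : 1 + 4 * a ≠ 0) (hr : r ≠ 0) (h : (1 + 4 * a) * r ^ 2 = 1 + 4 * b) :
    pointX a b r + a * b = (b / r) ^ 2 :=
  calc
    _ = (b * (b - a) + a * b * ((1 + 4 * a) * r ^ 2)) / ((1 + 4 * a) * r ^ 2) :=
      div_add' _ _ _ (mul_ne_zero ha (pow_ne_zero 2 hr))
    _ = (1 + 4 * a) * b ^ 2 / ((1 + 4 * a) * r ^ 2) := by
      congr 1
      linear_combination a * b * h
    _ = (b / r) ^ 2 := by rw [mul_div_mul_left _ _ ha, div_pow]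

theorem pointX_cubic (ha : 1 + 4 * a ≠ 0) (hr : r ≠ 0) (h : (1 + 4 * a) * r ^ 2 = 1 + 4 * b) :
    pointX a b r ^ 3 + a * b * pointX a b r ^ 2 =
      (b ^ 2 * (b - a) / ((1 + 4 * a) * r ^ 3)) ^ 2 :=
  calc
    _ = pointX a b r ^ 2 * (pointX a b r + a * b) := by ring
    _ = (pointX a b r * (b / r)) ^ 2 := by rw [pointX_add_mul ha hr h, mul_pow]
    _ = _ := by
      unfold pointX
      field_simp

theorem pointY_mul_pointY_add (h2 : (2 : K) ≠ 0) (ha : 1 + 4 * a ≠ 0) (hr : r ≠ 0) :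
    pointY a b r * (pointY a b r + (b / r) ^ 2) =
      b ^ 4 * ((1 + 2 * a + 2 * b) ^ 2 - ((1 + 4 * a) * r) ^ 2) /
        (2 * ((1 + 4 * a) * r ^ 3)) ^ 2 := by
  unfold pointY
  generalize 1 + 4 * a = s at ha ⊢
  field_simp
  ring

theorem pointY_quadratic (h2 : (2 : K) ≠ 0) (ha : 1 + 4 * a ≠ 0) (hr : r ≠ 0)
    (h : (1 + 4 * a) * r ^ 2 = 1 + 4 * b) :
    pointY a b r ^ 2 + pointX a b r * pointY a b r + a * b * pointY a b r =
      (b ^ 2 * (b - a) / ((1 + 4 * a) * r ^ 3)) ^ 2 := by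
  have hsq : ((1 + 4 * a) * r) ^ 2 = (1 + 4 * a) * (1 + 4 * b) := by
    rw [← h]
    ring
  calc
    _ = pointY a b r * (pointY a b r + (pointX a b r + a * b)) := by ring
    _ = b ^ 4 * (2 * (b - a)) ^ 2 / (2 * ((1 + 4 * a) * r ^ 3)) ^ 2 := by
      rw [pointX_add_mul ha hr h, pointY_mul_pointY_add h2 ha hr, hsq,
        sq_one_add_two_mul_add_two_mul_sub]
    _ = _ := by field_simp

end Point

theorem one_add_natCast_mul_pow_expChar_pow {R : Type*} [CommSemiring R] (p n c : ℕ) [ExpChar R p]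
    (u : R) : (1 + c * u) ^ p ^ n = 1 + c * u ^ p ^ n := by
  simp only [← iterateFrobenius_def, map_add, map_one, map_mul, map_natCast]

theorem one_add_C_mul_X_ne_zero {k : Type*} [CommRing k] [IsDomain k] (c : k) :
    1 + RatFunc.C c * RatFunc.X ≠ 0 := by
  have hpoly : (1 + Polynomial.C c * Polynomial.X : Polynomial k) ≠ 0 := fun h => by
    simpa using congrArg (Polynomial.eval 0) h
  simpa using RatFunc.algebraMap_ne_zero hpoly

theorem stmt6_general {K : Type*} [Field K] (p : ℕ) [Fact p.Prime] [CharP K p] (hp2 : p ≠ 2)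
    (n q : ℕ) (hq : q = p ^ n) (u : K) (hu : 1 + 4 * u ≠ 0) :
    let x₀ : K := u ^ q * (u ^ q - u) / (1 + 4 * u) ^ q
    let y₀ : K :=
      u ^ (2 * q) * (1 + 2 * u + 2 * u ^ q) / (2 * (1 + 4 * u) ^ ((3 * q - 1) / 2))
        - u ^ (2 * q) / (2 * (1 + 4 * u) ^ (q - 1))
    y₀ ^ 2 + x₀ * y₀ + u ^ (q + 1) * y₀
        = u ^ (4 * q) * (u ^ (2 * q) - 2 * u ^ (q + 1) + u ^ 2) / (1 + 4 * u) ^ (3 * q - 1) ∧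
    x₀ ^ 3 + u ^ (q + 1) * x₀ ^ 2
        = u ^ (4 * q) * (u ^ (2 * q) - 2 * u ^ (q + 1) + u ^ 2) / (1 + 4 * u) ^ (3 * q - 1) := by
  intro x₀ y₀
  have h2 : (2 : K) ≠ 0 := Ring.two_ne_zero (by rwa [ringChar.eq K p])
  obtain ⟨m, hm⟩ : Odd q := hq ▸ ((Fact.out : p.Prime).odd_of_ne_two hp2).pow
  have hfrob : (1 + 4 * u) ^ q = 1 + 4 * u ^ q := by
    simpa only [hq, Nat.cast_ofNat] using one_add_natCast_mul_pow_expChar_pow p n 4 u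
  set r := (1 + 4 * u) ^ m with hr_def
  have hr : r ≠ 0 := pow_ne_zero m hu
  have hpow : (1 + 4 * u) * r ^ 2 = (1 + 4 * u) ^ q := by rw [hr_def, hm]; ring
  have hcurve : (1 + 4 * u) * r ^ 2 = 1 + 4 * u ^ q := hpow.trans hfrob
  have hpow_half : (1 + 4 * u) ^ ((3 * q - 1) / 2) = (1 + 4 * u) * r ^ 3 := by
    rw [hr_def, show (3 * q - 1) / 2 = 3 * m + 1 by omega]; ring
  have hx : x₀ = pointX u (u ^ q) r := by rw [pointX, hpow]
  have hy : y₀ = pointY u (u ^ q) r := by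
    rw [pointY, ← hpow_half, hr_def, ← pow_mul, ← pow_mul, mul_comm q 2,
      show m * 2 = q - 1 by omega]
  have hvalue : u ^ (4 * q) * (u ^ (2 * q) - 2 * u ^ (q + 1) + u ^ 2) / (1 + 4 * u) ^ (3 * q - 1)
      = ((u ^ q) ^ 2 * (u ^ q - u) / ((1 + 4 * u) * r ^ 3)) ^ 2 := by
    rw [← hpow_half, div_pow, ← pow_mul (1 + 4 * u),
      show (3 * q - 1) / 2 * 2 = 3 * q - 1 by omega]
    ring
  rw [hx, hy, hvalue, pow_succ' u q]
  exact ⟨pointY_quadratic h2 hu hr hcurve, pointX_cubic hu hr hcurve⟩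

/-- Let `p` be an odd prime, `k` an algebraic closure of `𝔽_p`, `n ≥ 1`,
`q = p^n`, `d = q + 1`, `K_d = k(u)`, and let
`x₀ = u^q(u^q − u)/(1 + 4u)^q` and
`y₀ = u^{2q}(1 + 2u + 2u^q)/(2(1 + 4u)^{(3q−1)/2}) − u^{2q}/(2(1 + 4u)^{q−1})`.
Then both sides of the Weierstrass equation `y² + x·y + u^d·y = x³ + u^d·x²` evaluated at
`(x₀, y₀)` equal `u^{4q}(u^{2q} − 2u^{q+1} + u²)/(1 + 4u)^{3q−1}`. -/
theorem stmt6 (p : ℕ) [Fact p.Prime] (hp2 : p ≠ 2) (n : ℕ) (hn : 1 ≤ n) (q d : ℕ)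
    (hq : q = p ^ n) (hd : d = q + 1) :
    let k := AlgebraicClosure (ZMod p)
    let u : RatFunc k := RatFunc.X
    let x₀ : RatFunc k := u ^ q * (u ^ q - u) / (1 + 4 * u) ^ q
    let y₀ : RatFunc k :=
      u ^ (2 * q) * (1 + 2 * u + 2 * u ^ q) / (2 * (1 + 4 * u) ^ ((3 * q - 1) / 2))
        - u ^ (2 * q) / (2 * (1 + 4 * u) ^ (q - 1))
    y₀ ^ 2 + x₀ * y₀ + u ^ d * y₀
        = u ^ (4 * q) * (u ^ (2 * q) - 2 * u ^ (q + 1) + u ^ 2) / (1 + 4 * u) ^ (3 * q - 1) ∧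
    x₀ ^ 3 + u ^ d * x₀ ^ 2
        = u ^ (4 * q) * (u ^ (2 * q) - 2 * u ^ (q + 1) + u ^ 2) / (1 + 4 * u) ^ (3 * q - 1) := by
  have : CharP (RatFunc (AlgebraicClosure (ZMod p))) p :=
    (Algebra.charP_iff (AlgebraicClosure (ZMod p)) _ p).mp inferInstance
  subst hd
  exact stmt6_general p hp2 n q hq RatFunc.X
    (by simpa only [map_ofNat] using one_add_C_mul_X_ne_zero (4 : AlgebraicClosure (ZMod p)))
end

section
/- Let p be a prime, m, n ≥ 1, q = p^m, and d = p^n + 1. Then, as an inequality of rational numbers, Σ_{e ∣ d, e > 2} φ(e)/o_e(q) ≥ (p^n − 1)/(2n), where the sum is over divisors e > 2 of d, φ is Euler's totient function, and o_e(q) is the multiplicative order of q modulo e (well-defined since every divisor e of p^n + 1 is coprime to q). -/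
/-!
If `q ^ k ≡ 1` modulo `d`, then for every divisor `e` of `d` the order of `q` modulo `e` is at
most `k`, so the sum of the quotients `φ(e) / o_e(q)` is at least `1 / k` times the sum of the
`φ(e)`. By Gauss's identity `∑_{e ∣ d} φ(e) = d`, discarding the divisors `e ≤ 2` costs at most
`φ(1) + φ(2) = 2`. For `d = b ^ n + 1` one has `b ^ n ≡ -1`, so `k = 2 * n` works for every
power `q` of `b`.
-/

theorem le_sum_totient_divisors_gt_add_sum_Icc (d N : ℕ) :
    d ≤ ∑ e ∈ d.divisors with N < e, e.totient + ∑ e ∈ Finset.Icc 1 N, e.totient := by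
  have small_divisors_subset : {e ∈ d.divisors | ¬ N < e} ⊆ Finset.Icc 1 N := fun e he => by
    obtain ⟨he_dvd, he_le⟩ := Finset.mem_filter.1 he
    exact Finset.mem_Icc.2 ⟨Nat.pos_of_mem_divisors he_dvd, not_lt.1 he_le⟩
  calc d = ∑ e ∈ d.divisors, e.totient := (Nat.sum_totient d).symm
    _ = ∑ e ∈ d.divisors with N < e, e.totient + ∑ e ∈ d.divisors with ¬ N < e, e.totient :=
      (Finset.sum_filter_add_sum_filter_not _ _ _).symm
    _ ≤ _ := by gcongr

theorem div_le_div_orderOf_of_pow_eq_one {G K : Type*} [Monoid G] [Field K] [LinearOrder K]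
    [IsStrictOrderedRing K] {x : G} {k : ℕ} (hk : 0 < k) (hx : x ^ k = 1) {c : K} (hc : 0 ≤ c) :
    c / k ≤ c / orderOf x := by
  have order_pos : 0 < orderOf x :=
    orderOf_pos_iff.2 (isOfFinOrder_iff_pow_eq_one.2 ⟨k, hk, hx⟩)
  have order_le : orderOf x ≤ k := orderOf_le_of_pow_eq_one hk hx
  gcongr

theorem natCast_pow_eq_one_of_modEq_of_dvd {q k d e : ℕ} (h : q ^ k ≡ 1 [MOD d]) (he : e ∣ d) :
    (q : ZMod e) ^ k = 1 :=
  mod_cast (ZMod.natCast_eq_natCast_iff _ _ e).2 (h.of_dvd he)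

theorem sub_two_div_le_sum_totient_div_orderOf {q k d : ℕ} (hk : 0 < k)
    (h : q ^ k ≡ 1 [MOD d]) :
    ((d : ℚ) - 2) / k ≤ ∑ e ∈ d.divisors with 2 < e, (e.totient : ℚ) / orderOf (q : ZMod e) := by
  have sub_two_le : (d : ℚ) - 2 ≤ ∑ e ∈ d.divisors with 2 < e, (e.totient : ℚ) := by
    have totient_sum_two : ∑ e ∈ Finset.Icc 1 2, e.totient = 2 := by decide
    rw [sub_le_iff_le_add]
    exact_mod_cast totient_sum_two ▸ le_sum_totient_divisors_gt_add_sum_Icc d 2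
  calc ((d : ℚ) - 2) / k ≤ (∑ e ∈ d.divisors with 2 < e, (e.totient : ℚ)) / k := by gcongr
    _ = ∑ e ∈ d.divisors with 2 < e, (e.totient : ℚ) / k := Finset.sum_div _ _ _
    _ ≤ _ := Finset.sum_le_sum fun e he =>
      have he_dvd : e ∣ d := Nat.dvd_of_mem_divisors (Finset.mem_filter.1 he).1
      div_le_div_orderOf_of_pow_eq_one hk (natCast_pow_eq_one_of_modEq_of_dvd h he_dvd)
        e.totient.cast_nonneg

theorem sq_modEq_one_mod_add_one (a : ℕ) : a ^ 2 ≡ 1 [MOD a + 1] :=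
  (Nat.modEq_iff_dvd.2 ⟨(a : ℤ) - 1, by push_cast; ring⟩ : 1 ≡ a ^ 2 [MOD a + 1]).symm

theorem pow_pow_two_mul_modEq_one (b m n : ℕ) : (b ^ m) ^ (2 * n) ≡ 1 [MOD b ^ n + 1] :=
  calc (b ^ m) ^ (2 * n) = ((b ^ n) ^ 2) ^ m := by ring
    _ ≡ 1 ^ m [MOD b ^ n + 1] := (sq_modEq_one_mod_add_one (b ^ n)).pow m
    _ = 1 := one_pow m

theorem stmt11_general (b m n : ℕ) (hn : 1 ≤ n) :
    ((b : ℚ) ^ n - 1) / (2 * n)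
      ≤ ∑ e ∈ (b ^ n + 1).divisors with 2 < e,
          (e.totient : ℚ) / orderOf ((b ^ m : ℕ) : ZMod e) := by
  calc ((b : ℚ) ^ n - 1) / (2 * n) = (((b ^ n + 1 : ℕ) : ℚ) - 2) / (2 * n : ℕ) := by
        push_cast; ring
    _ ≤ _ :=
      sub_two_div_le_sum_totient_div_orderOf (by positivity) (pow_pow_two_mul_modEq_one b m n)

/-- Let `p` be a prime, `m, n ≥ 1`, `q = p^m`, and `d = p^n + 1`.  Then,
as an inequality of rational numbers, `∑_{e ∣ d, e > 2} φ(e)/o_e(q) ≥ (p^n − 1)/(2n)`,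
where `φ` is Euler's totient function and `o_e(q)` is the multiplicative order of `q`
modulo `e`. -/
theorem stmt11 (p : ℕ) (hp : p.Prime) (m n : ℕ) (hm : 1 ≤ m) (hn : 1 ≤ n)
    (q d : ℕ) (hq : q = p ^ m) (hd : d = p ^ n + 1) :
    ((p : ℚ) ^ n - 1) / (2 * n)
      ≤ ∑ e ∈ d.divisors.filter (fun e => 2 < e),
          (Nat.totient e : ℚ) / (orderOf ((q : ZMod e)) : ℚ) := by
  subst hq hd
  exact stmt11_general p m n hn
end

section
/- For positive integers a, b set δ(a,b) := (ab − a − b + gcd(a,b))/2. Then: (i) ab − a − b + gcd(a,b) is a nonnegative even integer, so δ(a,b) is a well-defined nonnegative integer; (ii) δ(a,b) = δ(b,a); (iii) δ(a,a) = a(a−1)/2; and (iv) if a > b then δ(a,b) = b(b−1)/2 + δ(a−b, b). Consequently, δ(a,b) equals the total sum Σ e_t(e_t − 1)/2 over the steps of the subtractive Euclidean algorithm applied to (a,b), where e_t is the smaller member of the pair at step t. -/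
/-- `δ(a,b) = (ab − a − b + gcd(a,b))/2`. -/
def ulmerDelta (a b : ℕ) : ℕ := (a * b + Nat.gcd a b - a - b) / 2

/-- The total of `e(e−1)/2` over the steps of the subtractive Euclidean algorithm applied
to `(a,b)`, where `e` is the smaller member of the pair at each step. -/
def subEuclidSum (a b : ℕ) : ℕ :=
  if _h : a = 0 ∨ b = 0 then 0
  else if _h2 : a ≤ b then a * (a - 1) / 2 + subEuclidSum a (b - a)
  else b * (b - 1) / 2 + subEuclidSum (a - b) b
termination_by a + b
decreasing_by
  · omega
  · omega

/-!
For positive `a, b`, the integer `ab - a - b + gcd(a,b)` equals `(a-1)(b-1) + (gcd(a,b) - 1)`, a sum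
of nonnegative terms, and it is even because the gcd is even exactly when both `a` and `b` are.
Hence the subtraction-free identity `2 δ(a,b) + a + b = ab + gcd(a,b)`.
Replacing `(a,b)` by `(a-b,b)` keeps the gcd and lowers `ab` by `b²` and `a` by `b`, so it lowers
`2 δ` by `b² - b`; thus `δ` obeys the recursion that defines `subEuclidSum`. That recursion stops at
a pair with a zero entry, where `δ = 0`, so the final pair `(g,g)` with `g = gcd(a,b)` counts as a
step and contributes `δ(g,g) = g(g-1)/2`.
-/

theorem add_le_mul_add_gcd (a b : ℕ) : a + b ≤ a * b + Nat.gcd a b := by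
  rcases Nat.eq_zero_or_pos a with rfl | ha
  · simp
  rcases Nat.eq_zero_or_pos b with rfl | hb
  · simp
  have h_gcd : 1 ≤ Nat.gcd a b := Nat.gcd_pos_of_pos_left b ha
  have h_mul : a + b - 1 ≤ a * b := Nat.add_sub_one_le_mul ha.ne' hb.ne'
  omega

theorem even_gcd_iff (a b : ℕ) : Even (Nat.gcd a b) ↔ Even a ∧ Even b := by
  simp only [even_iff_two_dvd, Nat.dvd_gcd_iff]

theorem even_mul_add_gcd_sub_sub (a b : ℕ) : Even (a * b + Nat.gcd a b - a - b) := by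
  have h_le := add_le_mul_add_gcd a b
  rw [Nat.sub_sub, Nat.even_sub h_le, Nat.even_add, Nat.even_add, Nat.even_mul, even_gcd_iff]
  tauto

theorem two_mul_ulmerDelta_add_add (a b : ℕ) :
    2 * ulmerDelta a b + a + b = a * b + Nat.gcd a b := by
  have h_le := add_le_mul_add_gcd a b
  have h_two_mul : 2 * ulmerDelta a b = a * b + Nat.gcd a b - a - b :=
    Nat.two_mul_div_two_of_even (even_mul_add_gcd_sub_sub a b)
  omega

theorem ulmerDelta_comm (a b : ℕ) : ulmerDelta a b = ulmerDelta b a := by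
  rw [ulmerDelta, ulmerDelta, mul_comm, Nat.gcd_comm, Nat.sub_right_comm]

theorem ulmerDelta_self (a : ℕ) : ulmerDelta a a = a * (a - 1) / 2 := by
  rw [ulmerDelta, Nat.gcd_self, Nat.add_sub_cancel, Nat.mul_sub_one]

theorem ulmerDelta_zero_left (b : ℕ) : ulmerDelta 0 b = 0 := by
  simp [ulmerDelta]

theorem ulmerDelta_add_left (a b : ℕ) :
    ulmerDelta (a + b) b = ulmerDelta b b + ulmerDelta a b := by
  have h_sum := two_mul_ulmerDelta_add_add (a + b) b
  have h_self := two_mul_ulmerDelta_add_add b b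
  have h_left := two_mul_ulmerDelta_add_add a b
  rw [Nat.gcd_add_self_left, add_mul] at h_sum
  rw [Nat.gcd_self] at h_self
  omega

theorem ulmerDelta_eq_add_ulmerDelta_sub_left {a b : ℕ} (h : b ≤ a) :
    ulmerDelta a b = b * (b - 1) / 2 + ulmerDelta (a - b) b := by
  rw [← ulmerDelta_self, ← ulmerDelta_add_left, Nat.sub_add_cancel h]

theorem ulmerDelta_eq_subEuclidSum (a b : ℕ) : ulmerDelta a b = subEuclidSum a b := by
  induction a, b using subEuclidSum.induct with
  | case1 a b h_zero =>
    rw [subEuclidSum, dif_pos h_zero]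
    rcases h_zero with rfl | rfl
    · exact ulmerDelta_zero_left b
    · rw [ulmerDelta_comm, ulmerDelta_zero_left]
  | case2 a b h_ne h_le ih =>
    rw [subEuclidSum, dif_neg h_ne, dif_pos h_le, ← ih, ulmerDelta_comm a b,
      ulmerDelta_comm a (b - a), ulmerDelta_eq_add_ulmerDelta_sub_left h_le]
  | case3 a b h_ne h_not_le ih =>
    rw [subEuclidSum, dif_neg h_ne, dif_neg h_not_le, ← ih,
      ulmerDelta_eq_add_ulmerDelta_sub_left (le_of_not_ge h_not_le)]

/-- For positive integers `a, b` set `δ(a,b) = (ab − a − b + gcd(a,b))/2`.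
Then: (i) `ab − a − b + gcd(a,b)` is a nonnegative even integer, so `δ(a,b)` is a
well-defined nonnegative integer; (ii) `δ(a,b) = δ(b,a)`; (iii) `δ(a,a) = a(a−1)/2`;
(iv) if `a > b` then `δ(a,b) = b(b−1)/2 + δ(a−b,b)`.  Consequently `δ(a,b)` equals the
total sum `∑ eₜ(eₜ−1)/2` over the steps of the subtractive Euclidean algorithm applied to
`(a,b)`, where `eₜ` is the smaller member of the pair at step `t`. -/
theorem stmt13 (a b : ℕ) (ha : 0 < a) (hb : 0 < b) :
    (a + b ≤ a * b + Nat.gcd a b ∧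
      2 * ulmerDelta a b + a + b = a * b + Nat.gcd a b) ∧
    ulmerDelta a b = ulmerDelta b a ∧
    ulmerDelta a a = a * (a - 1) / 2 ∧
    (a > b → ulmerDelta a b = b * (b - 1) / 2 + ulmerDelta (a - b) b) ∧
    ulmerDelta a b = subEuclidSum a b := by
  exact ⟨⟨add_le_mul_add_gcd a b, two_mul_ulmerDelta_add_add a b⟩,
    ulmerDelta_comm a b,
    ulmerDelta_self a,
    fun hab => ulmerDelta_eq_add_ulmerDelta_sub_left hab.le,
    ulmerDelta_eq_subEuclidSum a b⟩
end

section
/- Let k be an algebraically closed field and d ≥ 1 an integer not divisible by the characteristic of k. Then the polynomial x(x − 1)(1 − y) − u^d·y² is irreducible in the polynomial ring k[x, y, u]. -/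
open MvPolynomial

/-!
Regard the polynomial as a quadratic in `y` over `R[x, u]`, namely
`-u ^ d * y ^ 2 - x * (x - 1) * y + x * (x - 1)`. The prime `x` divides the two lower coefficients
but not the leading one, and divides the constant term only once, so this is an Eisenstein
polynomial at `x`. It is primitive, because the prime `u` does not divide `x * (x - 1)` and hence
`u ^ d` and `x * (x - 1)` have no common factor.
-/

theorem isRelPrime_pow_left_of_prime_of_not_dvd {M : Type*} [CommMonoidWithZero M]
    [IsCancelMulZero M] {p c : M} (hp : Prime p) (hc : ¬ p ∣ c) (n : ℕ) :
    IsRelPrime (p ^ n) c := by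
  intro r hr hrc
  obtain ⟨i, -, hri⟩ := (dvd_prime_pow hp n).1 hr
  obtain rfl | hi := eq_or_ne i 0
  · exact associated_one_iff_isUnit.1 (by simpa using hri)
  · exact absurd (((dvd_pow_self p hi).trans hri.symm.dvd).trans hrc) hc

section Eisenstein

open scoped Polynomial

theorem isPrimitive_of_isRelPrime_coeff {A : Type*} [CommSemiring A] {f : A[X]} {m n : ℕ}
    (h : IsRelPrime (f.coeff m) (f.coeff n)) : f.IsPrimitive := fun r hr ↦
  have hdvd := (Polynomial.C_dvd_iff_dvd_coeff r f).1 hr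
  h (hdvd m) (hdvd n)

variable {A : Type*} [CommRing A] [IsDomain A] {a b c p : A}

theorem irreducible_quadratic_of_eisenstein (hp : Prime p) (ha : ¬ p ∣ a) (hb : p ∣ b)
    (hc : p ∣ c) (hc2 : ¬ p ^ 2 ∣ c)
    (hprim : (Polynomial.C a * Polynomial.X ^ 2 + Polynomial.C b * Polynomial.X +
      Polynomial.C c).IsPrimitive) :
    Irreducible (Polynomial.C a * Polynomial.X ^ 2 + Polynomial.C b * Polynomial.X +
      Polynomial.C c) := by
  have ha0 : a ≠ 0 := by
    rintro rfl
    exact ha (dvd_zero p)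
  refine Polynomial.IsEisensteinAt.irreducible (𝓟 := Ideal.span {p}) ⟨?_, ?_, ?_⟩
    ((Ideal.span_singleton_prime hp.ne_zero).2 hp) hprim
    (by simp [Polynomial.natDegree_quadratic ha0])
  · rwa [Polynomial.leadingCoeff_quadratic ha0, Ideal.mem_span_singleton]
  · intro n hn
    rw [Polynomial.natDegree_quadratic ha0] at hn
    rw [Ideal.mem_span_singleton]
    interval_cases n <;> simpa [Polynomial.coeff_X, Polynomial.coeff_C]
  · rw [Ideal.span_singleton_pow, Ideal.mem_span_singleton]
    simpa

theorem irreducible_C_mul_one_sub_X_sub_C_mul_X_sq (hp : Prime p) (hc : p ∣ c)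
    (hc2 : ¬ p ^ 2 ∣ c) (hac : IsRelPrime a c) :
    Irreducible (Polynomial.C c * (1 - Polynomial.X) - Polynomial.C a * Polynomial.X ^ 2) := by
  have hquad : Polynomial.C c * (1 - Polynomial.X) - Polynomial.C a * Polynomial.X ^ 2 =
      Polynomial.C (-a) * Polynomial.X ^ 2 + Polynomial.C (-c) * Polynomial.X +
        Polynomial.C c := by
    simp only [Polynomial.C_neg]
    ring
  have hpa : ¬ p ∣ a := fun h ↦ hp.not_isUnit (hac h hc)
  rw [hquad]
  refine irreducible_quadratic_of_eisenstein hp (by rwa [dvd_neg]) (by rwa [dvd_neg]) hc hc2 ?_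
  refine isPrimitive_of_isRelPrime_coeff (m := 2) (n := 0) ?_
  simpa [Polynomial.coeff_X, Polynomial.coeff_C] using hac.neg_left

end Eisenstein

section Divisibility

variable {σ R : Type*} [CommRing R]

theorem not_X_dvd_X_sub_one [Nontrivial R] (i j : σ) :
    ¬ (X i : MvPolynomial σ R) ∣ X j - 1 := by
  intro h
  simpa using map_dvd constantCoeff h

variable [IsDomain R]

theorem isRelPrime_X_pow_X_mul_X_sub_one {i j : σ} (hij : i ≠ j) (n : ℕ) :
    IsRelPrime (X j ^ n : MvPolynomial σ R) (X i * (X i - 1)) := by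
  refine isRelPrime_pow_left_of_prime_of_not_dvd X_prime (fun h ↦ ?_) n
  obtain h | h := X_prime.dvd_or_dvd h
  · exact hij (X_dvd_X.1 h).symm
  · exact not_X_dvd_X_sub_one j i h

theorem not_X_sq_dvd_X_mul_X_sub_one (i : σ) :
    ¬ (X i ^ 2 : MvPolynomial σ R) ∣ X i * (X i - 1) := by
  rw [pow_two, mul_dvd_mul_iff_left (X_ne_zero i)]
  exact not_X_dvd_X_sub_one i i

end Divisibility

section SuccAbove

variable (R : Type*) [CommSemiring R] {n : ℕ} (i : Fin (n + 1))

/-- The isomorphism `R[X₀, …, Xₙ] ≃ R[X₀, …, X̂ᵢ, …, Xₙ][Xᵢ]` singling out the `i`-th variable,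
the others being renumbered in order. It generalizes `MvPolynomial.finSuccEquiv`, which is the case
`i = 0`, and is used to regard a polynomial as univariate in a variable other than the first. -/
noncomputable def polynomialEquivSuccAbove :
    MvPolynomial (Fin (n + 1)) R ≃ₐ[R] Polynomial (MvPolynomial (Fin n) R) :=
  (renameEquiv R (finSuccEquiv' i)).trans (optionEquivLeft R (Fin n))

theorem polynomialEquivSuccAbove_X_self :
    polynomialEquivSuccAbove R i (X i) = Polynomial.X := by
  simp [polynomialEquivSuccAbove]

theorem polynomialEquivSuccAbove_X_succAbove (j : Fin n) :
    polynomialEquivSuccAbove R i (X (i.succAbove j)) = Polynomial.C (X j) := by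
  simp [polynomialEquivSuccAbove]

end SuccAbove

theorem stmt14_general (R : Type*) [CommRing R] [IsDomain R] (d : ℕ) :
    Irreducible
      ((X 0 * (X 0 - 1) * (1 - X 1) - X 2 ^ d * X 1 ^ 2 : MvPolynomial (Fin 3) R)) := by
  let e := polynomialEquivSuccAbove R (1 : Fin 3)
  have hx : e (X 0) = Polynomial.C (X 0) := polynomialEquivSuccAbove_X_succAbove R 1 0
  have hy : e (X 1) = Polynomial.X := polynomialEquivSuccAbove_X_self R 1
  have hu : e (X 2) = Polynomial.C (X 1) := polynomialEquivSuccAbove_X_succAbove R 1 1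
  have he : e (X 0 * (X 0 - 1) * (1 - X 1) - X 2 ^ d * X 1 ^ 2) =
      Polynomial.C (X 0 * (X 0 - 1)) * (1 - Polynomial.X) -
        Polynomial.C (X 1 ^ d) * Polynomial.X ^ 2 := by
    simp only [map_sub, map_mul, map_pow, map_one, hx, hy, hu]
  rw [← MulEquiv.irreducible_iff e, he]
  exact irreducible_C_mul_one_sub_X_sub_C_mul_X_sq X_prime (dvd_mul_right _ _)
    (not_X_sq_dvd_X_mul_X_sub_one 0) (isRelPrime_X_pow_X_mul_X_sub_one zero_ne_one d)

/-- Let `k` be an algebraically closed field and `d ≥ 1` an integer not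
divisible by the characteristic of `k`.  Then the polynomial `x(x − 1)(1 − y) − u^d·y²` is
irreducible in the polynomial ring `k[x, y, u]`. -/
theorem stmt14 (k : Type*) [Field k] [IsAlgClosed k] (d : ℕ) (hd : 1 ≤ d)
    (hchar : ¬ ringChar k ∣ d) :
    Irreducible
      ((X 0 * (X 0 - 1) * (1 - X 1) - X 2 ^ d * X 1 ^ 2 : MvPolynomial (Fin 3) k)) :=
  stmt14_general k d
end
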